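/- arXiv:1501.02618 — 2 statements merged into one kernel-verified Lean document; each statement's English description precedes it below -/
import Mathlib

section
/- For every y ≥ 52 and t > 0 with y² ≥ 16·t, and every s with 4t²/y² < s < t, one has 1 − 2e^{−1} ≤ (p(t,1,y) − p(t−s,1,y))/p(t,1,y) ≤ 1. -/
open Real MeasureTheory

/-- Modified Bessel function of the first kind, order 0. -/
noncomputable def I0 (z : ℝ) : ℝ := ∑' n : ℕ, (z/2)^(2*n) / ((n.factorial : ℝ))^2

/-- Modified Bessel function of the first kind, order 1. -/
noncomputable def I1 (z : ℝ) : ℝ :=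
  ∑' n : ℕ, (z/2)^(2*n+1) / ((n.factorial : ℝ) * ((n+1).factorial : ℝ))

/-- Heat kernel of the Bessel operator `d²/dx² + (1/x) d/dx` on `(0,∞)`
with respect to the measure `y dy`. -/
noncomputable def pk (t x y : ℝ) : ℝ :=
  t⁻¹ * Real.exp (-(x^2 + y^2)/(2*t)) * I0 (x*y/t)

/-- The function `h` from (AC): Dirichlet heat kernel of `(1/2) d²/dx²` on `(1,∞)`
multiplied by `(xy)⁻¹`. -/
noncomputable def hker (t x y : ℝ) : ℝ :=
  (2*Real.pi*t)^(-(1:ℝ)/2) * (x*y)⁻¹ *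
    (Real.exp (-(x-y)^2/(2*t)) - Real.exp (-(x+y-2)^2/(2*t)))

lemma aux_summable (z : ℝ) :
    Summable (fun n : ℕ => (z/2)^(2*n) / ((n.factorial : ℝ))^2) := by
  refine Summable.of_nonneg_of_le (fun n => ?_) (fun n => ?_)
    (Real.summable_pow_div_factorial ((z/2)^2))
  · rw [pow_mul]; positivity
  · have h1 : (1:ℝ) ≤ n.factorial := by exact_mod_cast n.factorial_pos
    rw [pow_mul]
    apply div_le_div_of_nonneg_left (by positivity) (by positivity)
    nlinarith

lemma aux_pow (A B : ℝ) (hA : 0 ≤ A) (hAB : A ≤ B) (m : ℕ) :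
    B^(m+1) - A^(m+1) ≤ (m+1) * B^m * (B - A) := by
  induction m with
  | zero => simp
  | succ m ih =>
    have hB : 0 ≤ B := hA.trans hAB
    have h1 : A^(m+1) ≤ B^(m+1) := pow_le_pow_left₀ hA hAB _
    have h2 := mul_le_mul_of_nonneg_left ih hB
    have h3 := mul_le_mul_of_nonneg_right h1 (sub_nonneg.2 hAB)
    push_cast
    calc B^(m+1+1) - A^(m+1+1) = B * (B^(m+1) - A^(m+1)) + A^(m+1) * (B-A) := by ring
      _ ≤ B * ((m+1) * B^m * (B - A)) + B^(m+1) * (B-A) := by linarith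
      _ = _ := by ring

lemma aux_term (a b : ℝ) (ha : 0 ≤ a) (hab : a ≤ b) (n : ℕ) :
    (b/2)^(2*(n+1)) / (((n+1).factorial : ℝ))^2 - (a/2)^(2*(n+1)) / (((n+1).factorial : ℝ))^2
    ≤ (b-a) * (((b/2)^(2*n) / ((n.factorial : ℝ))^2
        + (b/2)^(2*(n+1)) / (((n+1).factorial : ℝ))^2) / 2) := by
  have h := aux_pow (a/2) (b/2) (by linarith) (by linarith) (2*n+1)
  have hf : (0:ℝ) < n.factorial := by exact_mod_cast n.factorial_pos
  have hf1 : (((n+1).factorial : ℕ) : ℝ) = (n+1) * n.factorial := by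
    rw [Nat.factorial_succ]; push_cast; ring
  have hn : (0:ℝ) < (n:ℝ)+1 := by positivity
  set B := b/2 with hB
  have e1 : (b/2)^(2*n) / ((n.factorial : ℝ))^2 = (B^n/n.factorial)^2 := by
    rw [← hB, div_pow _ _ 2, ← pow_mul, mul_comm n 2]
  have e2 : (b/2)^(2*(n+1)) / (((n+1).factorial : ℝ))^2 = (B^(n+1)/(n+1).factorial)^2 := by
    rw [← hB, div_pow _ _ 2, ← pow_mul, mul_comm (n+1) 2]
  have amgm : B^n/n.factorial * (B^(n+1)/(n+1).factorial)
      ≤ ((B^n/n.factorial)^2 + (B^(n+1)/(n+1).factorial)^2)/2 := by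
    nlinarith [sq_nonneg (B^n/n.factorial - B^(n+1)/(n+1).factorial)]
  calc _ = (B^(2*n+1+1) - (a/2)^(2*n+1+1)) / (((n+1).factorial : ℝ))^2 := by
        rw [← sub_div]; rfl
    _ ≤ ((((2*n+1:ℕ):ℝ)+1) * B^(2*n+1) * (B - a/2)) / (((n+1).factorial : ℝ))^2 := by
        gcongr
    _ = (b-a) * (B^n/n.factorial * (B^(n+1)/(n+1).factorial)) := by
        rw [hf1, hB]; push_cast; field_simp; ring
    _ ≤ (b-a) * (((B^n/n.factorial)^2 + (B^(n+1)/(n+1).factorial)^2)/2) :=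
        mul_le_mul_of_nonneg_left amgm (by linarith)
    _ = _ := by rw [← e1, ← e2]

lemma aux_step (a b : ℝ) (ha : 0 ≤ a) (hab : a ≤ b) :
    I0 b * (1 - (b - a)) ≤ I0 a := by
  have sa := aux_summable a
  have sb := aux_summable b
  have sa1 := (summable_nat_add_iff 1).2 sa
  have sb1 := (summable_nat_add_iff 1).2 sb
  have hA : I0 a = 1 + ∑' n : ℕ, (a/2)^(2*(n+1)) / (((n+1).factorial : ℝ))^2 := by
    unfold I0; rw [sa.tsum_eq_zero_add]; simp
  have hB : I0 b = 1 + ∑' n : ℕ, (b/2)^(2*(n+1)) / (((n+1).factorial : ℝ))^2 := by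
    unfold I0; rw [sb.tsum_eq_zero_add]; simp
  have h := (sb1.sub sa1).tsum_le_tsum (aux_term a b ha hab)
    (((sb.add sb1).div_const 2).mul_left (b-a))
  rw [sb1.tsum_sub sa1, tsum_mul_left, tsum_div_const, sb.tsum_add sb1] at h
  change _ ≤ (b-a) * ((I0 b + _)/2) at h
  nlinarith

lemma aux_iter (a d : ℝ) (ha : 0 ≤ a) (hd : 0 ≤ d) (hd1 : d ≤ 1) (j : ℕ) :
    I0 (a + j*d) * (1-d)^j ≤ I0 a := by
  induction j with
  | zero => simp
  | succ j ih =>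
    have hj : 0 ≤ (j:ℝ) * d := by positivity
    have h := aux_step (a + j*d) (a + (j+1:ℕ)*d) (by positivity) (by push_cast; linarith)
    have e : (1 - ((a + (j+1:ℕ)*d) - (a + j*d))) = 1 - d := by push_cast; ring
    rw [e] at h
    have h' := mul_le_mul_of_nonneg_right h (pow_nonneg (sub_nonneg.2 hd1) j)
    calc _ = I0 (a + (j+1:ℕ)*d) * (1-d) * (1-d)^j := by ring
      _ ≤ _ := h'.trans ih

lemma aux_exp (a b : ℝ) (ha : 0 ≤ a) (hab : a ≤ b) :
    I0 b * Real.exp (-(b-a)) ≤ I0 a := by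
  have ht := (Real.tendsto_one_add_div_pow_exp (-(b-a))).const_mul (I0 b)
  refine le_of_tendsto ht ?_
  obtain ⟨N, hN⟩ := exists_nat_ge (b-a)
  filter_upwards [Filter.eventually_ge_atTop (N+1)] with n hn
  have hn' : (N:ℝ)+1 ≤ n := by exact_mod_cast hn
  have hn0 : (0:ℝ) < n := by have : (0:ℝ) ≤ N := by positivity
                             linarith
  have h := aux_iter a ((b-a)/n) ha (div_nonneg (by linarith) hn0.le)
    ((div_le_one hn0).2 (by linarith)) n
  have e : a + n*((b-a)/n) = b := by field_simp; ring
  rw [e] at h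
  have e2 : 1 + -(b-a)/n = 1 - (b-a)/n := by ring
  rw [e2]
  exact h

lemma aux_pos (z : ℝ) : 0 < I0 z := by
  unfold I0
  refine (aux_summable z).tsum_pos (fun n => ?_) 0 (by simp)
  rw [pow_mul]; positivity

theorem bessel_heat_kernel_time_difference_large_s :
    ∀ y t s : ℝ, 52 ≤ y → 0 < t → 16*t ≤ y^2 → 4*t^2/y^2 < s → s < t →
      1 - 2*Real.exp (-1) ≤ (pk t 1 y - pk (t-s) 1 y) / pk t 1 y ∧
      (pk t 1 y - pk (t-s) 1 y) / pk t 1 y ≤ 1 := by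
  intro y t s hy ht hty hs hst
  have hτ : 0 < t - s := by linarith
  have hp : ∀ r : ℝ, 0 < r → 0 < pk r 1 y := fun r hr => by
    unfold pk
    have := aux_pos (1*y/r)
    positivity
  have hp1 := hp t ht
  have hp2 := hp (t-s) hτ
  have hy2 : 0 < y^2 := by positivity
  have hs0 : 0 < s := lt_trans (by positivity) hs
  have key : pk (t-s) 1 y ≤ Real.exp (-1) * pk t 1 y := by
    have hab : 1*y/t ≤ 1*y/(t-s) :=
      div_le_div_of_nonneg_left (by linarith) hτ (by linarith)
    have hI := aux_exp (1*y/t) (1*y/(t-s)) (by positivity) hab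
    have hI' : I0 (1*y/(t-s)) ≤ Real.exp (1*y/(t-s) - 1*y/t) * I0 (1*y/t) := by
      have := mul_le_mul_of_nonneg_left hI (Real.exp_pos (1*y/(t-s) - 1*y/t)).le
      rw [mul_left_comm, ← Real.exp_add] at this
      simpa using this
    have hu : (t-s)⁻¹ ≤ t⁻¹ * Real.exp (s/(t-s)) := by
      have h := Real.add_one_le_exp (s/(t-s))
      have e : (t-s)⁻¹ = t⁻¹ * (s/(t-s)+1) := by field_simp; ring
      rw [e]; gcongr
    have hexp : s/(t-s) + -(1^2+y^2)/(2*(t-s)) + (1*y/(t-s) - 1*y/t)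
        ≤ -1 + -(1^2+y^2)/(2*t) := by
      have hs' : 4*t^2 < s*y^2 := (div_lt_iff₀ hy2).1 hs
      have e : (-1 + -(1^2+y^2)/(2*t)) -
          (s/(t-s) + -(1^2+y^2)/(2*(t-s)) + (1*y/(t-s) - 1*y/t))
          = (s*(y-1)^2 - 2*t^2) / (2*t*(t-s)) := by
        field_simp; ring
      have : 0 ≤ (s*(y-1)^2 - 2*t^2) / (2*t*(t-s)) := by
        apply div_nonneg _ (by positivity)
        have : y^2 ≤ 2*(y-1)^2 := by nlinarith
        nlinarith [mul_le_mul_of_nonneg_left this hs0.le]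
      linarith
    unfold pk
    calc _ ≤ (t⁻¹ * Real.exp (s/(t-s))) * Real.exp (-(1^2+y^2)/(2*(t-s)))
          * (Real.exp (1*y/(t-s) - 1*y/t) * I0 (1*y/t)) := by
          have := (aux_pos (1*y/(t-s))).le
          gcongr
      _ = t⁻¹ * I0 (1*y/t) *
          Real.exp (s/(t-s) + -(1^2+y^2)/(2*(t-s)) + (1*y/(t-s) - 1*y/t)) := by
          rw [Real.exp_add, Real.exp_add]; ring
      _ ≤ t⁻¹ * I0 (1*y/t) * Real.exp (-1 + -(1^2+y^2)/(2*t)) := by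
          have := aux_pos (1*y/t)
          gcongr
      _ = _ := by rw [Real.exp_add]; ring
  constructor
  · rw [le_div_iff₀ hp1]
    nlinarith [mul_pos (Real.exp_pos (-1)) hp1]
  · rw [div_le_one hp1]; linarith
end

section
/- There exists an absolute constant C > 0 such that for all x > 1, y > 0 and t > 0 with xy ≤ t and y² ≥ 16·t, one has 0 < p(t,x,y) − p(t,1,y) ≤ C·x·(x−1)·(y²/t²)·p(t,1,y). -/
open Real MeasureTheory

theorem I0_summable (u : ℝ) (hu : 0 ≤ u) :
    Summable (fun n : ℕ => u^n / ((n.factorial : ℝ))^2) := by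
  refine Summable.of_nonneg_of_le (fun n => by positivity) (fun n => ?_)
    (Real.summable_pow_div_factorial u)
  have h1 : (1:ℝ) ≤ n.factorial := by exact_mod_cast Nat.succ_le_of_lt n.factorial_pos
  apply div_le_div_of_nonneg_left (by positivity) (by positivity)
  nlinarith

theorem I0_eq (z : ℝ) : I0 z = ∑' n : ℕ, ((z/2)^2)^n / ((n.factorial : ℝ))^2 := by
  unfold I0
  simp only [pow_mul]

theorem exp_hasSum (u : ℝ) : HasSum (fun n : ℕ => u^n / (n.factorial : ℝ)) (Real.exp u) := by
  rw [Real.exp_eq_exp_ℝ]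
  exact NormedSpace.expSeries_div_hasSum_exp u

theorem F_le_exp (u : ℝ) (hu : 0 ≤ u) :
    ∑' n : ℕ, u^n / ((n.factorial : ℝ))^2 ≤ Real.exp u := by
  rw [← (exp_hasSum u).tsum_eq]
  refine Summable.tsum_le_tsum (fun n => ?_) (I0_summable u hu) (exp_hasSum u).summable
  have h1 : (1:ℝ) ≤ n.factorial := by exact_mod_cast Nat.succ_le_of_lt n.factorial_pos
  apply div_le_div_of_nonneg_left (by positivity) (by positivity)
  nlinarith

theorem one_le_F (u : ℝ) (hu : 0 ≤ u) :
    1 ≤ ∑' n : ℕ, u^n / ((n.factorial : ℝ))^2 := by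
  have := (I0_summable u hu).le_tsum 0 (fun n _ => by positivity)
  simpa using this

theorem F_lower (u v : ℝ) (hv : 0 ≤ v) (huv : v ≤ u) :
    u - v ≤ ∑' n : ℕ, u^n / ((n.factorial : ℝ))^2 - ∑' n : ℕ, v^n / ((n.factorial : ℝ))^2 := by
  have hu := hv.trans huv
  rw [← (I0_summable u hu).tsum_sub (I0_summable v hv)]
  have := ((I0_summable u hu).sub (I0_summable v hv)).le_tsum 1 (fun n _ => by
    rw [sub_nonneg]; gcongr)
  simpa using this

theorem pow_sub_le (u v : ℝ) (hv : 0 ≤ v) (huv : v ≤ u) (hu1 : u ≤ 1) (n : ℕ) :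
    u^n - v^n ≤ n * (u - v) := by
  induction n with
  | zero => simp
  | succ k ih =>
    have hk : v^k ≤ 1 := pow_le_one₀ hv (huv.trans hu1)
    have hk2 : v^k ≤ u^k := by gcongr
    have e : u^(k+1) - v^(k+1) = u * (u^k - v^k) + v^k * (u - v) := by ring
    rw [e]; push_cast
    nlinarith [mul_le_mul_of_nonneg_right hu1 (sub_nonneg.2 hk2),
      mul_le_mul_of_nonneg_right hk (sub_nonneg.2 huv)]

theorem F_upper (u v : ℝ) (hv : 0 ≤ v) (huv : v ≤ u) (hu1 : u ≤ 1) :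
    ∑' n : ℕ, u^n / ((n.factorial : ℝ))^2 - ∑' n : ℕ, v^n / ((n.factorial : ℝ))^2
      ≤ 3 * (u - v) := by
  have hu := hv.trans huv
  rw [← (I0_summable u hu).tsum_sub (I0_summable v hv)]
  have hs := (exp_hasSum 1).mul_right (u - v)
  have h1 : ∑' n : ℕ, (u^n / ((n.factorial : ℝ))^2 - v^n / ((n.factorial : ℝ))^2)
      ≤ Real.exp 1 * (u - v) := by
    rw [← hs.tsum_eq]
    refine Summable.tsum_le_tsum (fun n => ?_)
      ((I0_summable u hu).sub (I0_summable v hv)) hs.summable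
    have hf : (0:ℝ) < n.factorial := by exact_mod_cast n.factorial_pos
    have hn : (n:ℝ) ≤ n.factorial := by exact_mod_cast n.self_le_factorial
    have hp := pow_sub_le u v hv huv hu1 n
    rw [← sub_div, one_pow, div_mul_eq_mul_div, div_le_div_iff₀ (by positivity) hf]
    have : u^n - v^n ≤ n.factorial * (u - v) :=
      hp.trans (mul_le_mul_of_nonneg_right hn (sub_nonneg.2 huv))
    nlinarith
  have := Real.exp_one_lt_d9
  nlinarith

theorem bessel_heat_kernel_space_difference :
    ∃ C : ℝ, 0 < C ∧ ∀ x y t : ℝ, 1 < x → 0 < y → 0 < t → x*y ≤ t → 16*t ≤ y^2 →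
      0 < pk t x y - pk t 1 y ∧
      pk t x y - pk t 1 y ≤ C * (x * (x-1) * (y^2/t^2) * pk t 1 y) := by
  refine ⟨3, by norm_num, ?_⟩
  intro x y t hx hy ht hxy hyt
  have hw : x*y/t ≤ 1 := by rw [div_le_one ht]; exact hxy
  have hw0 : 0 ≤ x*y/t := by positivity
  obtain ⟨u, hu⟩ : ∃ u, u = (x*y/t/2)^2 := ⟨_, rfl⟩
  obtain ⟨v, hv⟩ : ∃ v, v = (1*y/t/2)^2 := ⟨_, rfl⟩
  obtain ⟨b, hb⟩ : ∃ b, b = y^2/t^2 := ⟨_, rfl⟩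
  have hb0 : 0 < b := by rw [hb]; positivity
  have hub : u = x^2*b/4 := by rw [hu, hb]; field_simp; norm_num
  have hvb : v = b/4 := by rw [hv, hb]; field_simp; norm_num
  have hu4 : u ≤ 1/4 := by rw [hu]; nlinarith
  have hv0 : 0 ≤ v := by rw [hvb]; positivity
  have huv : v ≤ u := by rw [hub, hvb]; nlinarith [mul_pos hb0 (show (0:ℝ) < x^2-1 by nlinarith)]
  have hL := F_lower u v hv0 huv
  have hU := F_upper u v hv0 huv (by linarith)
  have h1 := one_le_F v hv0
  have h2 := F_le_exp u (hv0.trans huv)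
  have hF2 : Real.exp u ≤ 2 := by
    have h3 : Real.exp u ≤ Real.exp (1/4) := Real.exp_le_exp.2 hu4
    have h4 : Real.exp (1/4) ^ 4 = Real.exp 1 := by rw [← Real.exp_nat_mul]; norm_num
    by_contra hc
    have h5 : 2 < Real.exp (1/4) := by linarith
    have h6 : (2:ℝ)^4 < Real.exp (1/4) ^ 4 := by gcongr
    have := Real.exp_one_lt_d9
    rw [h4] at h6; linarith
  obtain ⟨d, hd⟩ : ∃ d, d = (x^2-1)/(2*t) := ⟨_, rfl⟩
  have hd0 : 0 ≤ d := by rw [hd]; apply div_nonneg <;> nlinarith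
  have hdb : d ≤ (u - v)/8 := by
    have ht' : 1/t ≤ b/16 := by
      rw [hb, div_div, div_le_div_iff₀ ht (by positivity)]; nlinarith
    have : d = (x^2-1)/2 * (1/t) := by rw [hd]; field_simp
    rw [this, hub, hvb]
    nlinarith [mul_le_mul_of_nonneg_left ht' (show (0:ℝ) ≤ (x^2-1)/2 by nlinarith)]
  have huv' : 0 < u - v := by rw [hub, hvb]; nlinarith [mul_pos hb0 (show (0:ℝ) < x^2-1 by nlinarith)]
  have hE : Real.exp (-(x^2+y^2)/(2*t)) = Real.exp (-(1^2+y^2)/(2*t)) * Real.exp (-d) := by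
    rw [← Real.exp_add, hd]; congr 1; field_simp; ring
  have hed : 1 - d ≤ Real.exp (-d) := by have := Real.add_one_le_exp (-d); linarith
  have hed1 : Real.exp (-d) ≤ 1 := Real.exp_le_one_iff.2 (by linarith)
  unfold pk
  rw [I0_eq, I0_eq, hE, ← hu, ← hv, ← hb]
  generalize (∑' n : ℕ, u^n / ((n.factorial : ℝ))^2) = Fu at *
  generalize (∑' n : ℕ, v^n / ((n.factorial : ℝ))^2) = Fv at *
  have hK : 0 < t⁻¹ * Real.exp (-(1^2+y^2)/(2*t)) := by positivity
  have e1 : t⁻¹ * (Real.exp (-(1^2+y^2)/(2*t)) * Real.exp (-d)) * Fu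
      - t⁻¹ * Real.exp (-(1^2+y^2)/(2*t)) * Fv
      = (t⁻¹ * Real.exp (-(1^2+y^2)/(2*t))) * (Real.exp (-d) * Fu - Fv) := by ring
  have e2 : 3 * (x * (x-1) * b * (t⁻¹ * Real.exp (-(1^2+y^2)/(2*t)) * Fv))
      = (t⁻¹ * Real.exp (-(1^2+y^2)/(2*t))) * (3 * (x * (x-1) * b) * Fv) := by ring
  rw [e1, e2]
  have hFu : 0 < Fu := by linarith
  constructor
  · apply mul_pos hK
    have a1 := mul_le_mul_of_nonneg_right hed hFu.le
    have a2 := mul_le_mul_of_nonneg_left (h2.trans hF2) hd0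
    linarith
  · apply mul_le_mul_of_nonneg_left _ hK.le
    have a1 := mul_le_mul_of_nonneg_right hed1 hFu.le
    have a3 : 0 ≤ x * (x-1) * b := mul_nonneg (mul_nonneg (by linarith) (by linarith)) hb0.le
    have a2 := mul_le_mul_of_nonneg_left h1 a3
    have a4 : u - v ≤ x * (x-1) * b := by
      rw [hub, hvb]
      nlinarith [mul_nonneg hb0.le (mul_nonneg (show (0:ℝ) ≤ x-1 by linarith) (show (0:ℝ) ≤ 3*x-1 by linarith))]
    linarith
end
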